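/- Theorem 3.7, first current (homogeneous potentials of degree k = D/Δ_D): let D ≥ 1 with D ≠ 2, set Δ := (D−2)/2 and k := 2·D/(D−2). Let U : ℝ → ℝ be smooth satisfying the Euler identity u·U'(u) = k·U(u) for all u ∈ ℝ (homogeneity of degree k), and let φ : (Fin D → ℝ) → ℝ be a smooth solution of □φ x + U'(φ x) = 0 for all x. With L x := (1/2)·Σ_{μ,ν} η μ ν · ∂_μ φ x · ∂_ν φ x − U(φ x) and Energy–Momentum tensor T^μ_ν x := ∂^μ φ x · ∂_ν φ x − (if μ = ν then L x else 0), the current J^μ x := Δ · φ x · ∂^μ φ x + Σ_α (x α) · T^μ_α x is conserved: Σ_μ ∂_μ (fun y ↦ J^μ y) x = 0 for all x. -/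

import Mathlib

open scoped BigOperators

noncomputable section

/-- Minkowski metric on `Fin D`. -/
def eta (D : ℕ) (μ ν : Fin D) : ℝ :=
  if μ = ν then (if (μ : ℕ) = 0 then 1 else -1) else 0

/-- Spacetime partial derivative `∂_μ F x`. -/
def pd {D : ℕ} (F : (Fin D → ℝ) → ℝ) (μ : Fin D) (x : Fin D → ℝ) : ℝ :=
  fderiv ℝ F x (Pi.single μ 1)

/-- Raised-index partial derivative `∂^μ F x`. -/
def pdu {D : ℕ} (F : (Fin D → ℝ) → ℝ) (μ : Fin D) (x : Fin D → ℝ) : ℝ :=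
  ∑ ν, eta D μ ν * pd F ν x

/-- d'Alembertian `□F x`. -/
def box {D : ℕ} (F : (Fin D → ℝ) → ℝ) (x : Fin D → ℝ) : ℝ :=
  ∑ μ, pd (fun y => pdu F μ y) μ x

/-- The canonical Lagrangian `(1/2) ∂_μφ ∂^μφ − U(φ)`. -/
def Lag {D : ℕ} (U : ℝ → ℝ) (φ : (Fin D → ℝ) → ℝ) (x : Fin D → ℝ) : ℝ :=
  (1/2) * ∑ μ, ∑ ν, eta D μ ν * pd φ μ x * pd φ ν x - U (φ x)

/-- Energy–Momentum tensor `T^μ_ν` for the canonical Lagrangian. -/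
def EMTc {D : ℕ} (U : ℝ → ℝ) (φ : (Fin D → ℝ) → ℝ) (μ ν : Fin D) (x : Fin D → ℝ) : ℝ :=
  pdu φ μ x * pd φ ν x - (if μ = ν then Lag U φ x else 0)

/-! Under dilations `x ↦ λx` the field scales with weight `-Δ`, and `J` is the corresponding Noether
current. Its divergence splits as
`∂_μ J^μ = Δ (∂φ·∂φ + φ □φ) + T^μ_μ + x^α ∂_μ T^μ_α`.
The last term is `x^α ∂_α φ (□φ + U'(φ))`, which vanishes on solutions, and the trace is
`T^μ_μ = (1 - D/2) ∂φ·∂φ + D U(φ)`. The choice `Δ = (D - 2)/2` cancels the kinetic terms, leaving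
`D U(φ) - Δ φ U'(φ)`, which is zero by Euler's identity. -/

section

variable {D : ℕ} {U : ℝ → ℝ} {F G φ : (Fin D → ℝ) → ℝ} {x : Fin D → ℝ}

theorem pd_add (hF : DifferentiableAt ℝ F x) (hG : DifferentiableAt ℝ G x) (μ : Fin D) :
    pd (fun y => F y + G y) μ x = pd F μ x + pd G μ x := by
  simp only [pd, fderiv_fun_add hF hG, add_apply]

theorem pd_sub (hF : DifferentiableAt ℝ F x) (hG : DifferentiableAt ℝ G x) (μ : Fin D) :
    pd (fun y => F y - G y) μ x = pd F μ x - pd G μ x := by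
  simp only [pd, fderiv_fun_sub hF hG, sub_apply]

theorem pd_mul (hF : DifferentiableAt ℝ F x) (hG : DifferentiableAt ℝ G x) (μ : Fin D) :
    pd (fun y => F y * G y) μ x = pd F μ x * G x + F x * pd G μ x := by
  simp only [pd, fderiv_fun_mul hF hG, add_apply,
    smul_apply, smul_eq_mul]
  ring

theorem pd_const_mul (hF : DifferentiableAt ℝ F x) (c : ℝ) (μ : Fin D) :
    pd (fun y => c * F y) μ x = c * pd F μ x := by
  simp only [pd, fderiv_const_mul hF, smul_apply, smul_eq_mul]

theorem pd_sum {ι : Type*} {s : Finset ι} {H : ι → (Fin D → ℝ) → ℝ}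
    (hH : ∀ i ∈ s, DifferentiableAt ℝ (H i) x) (μ : Fin D) :
    pd (fun y => ∑ i ∈ s, H i y) μ x = ∑ i ∈ s, pd (H i) μ x := by
  simp only [pd, fderiv_fun_sum hH, sum_apply]

theorem pd_comp (hU : DifferentiableAt ℝ U (F x)) (hF : DifferentiableAt ℝ F x) (μ : Fin D) :
    pd (fun y => U (F y)) μ x = deriv U (F x) * pd F μ x := by
  have hUF := hU.hasDerivAt.comp_hasFDerivAt x hF.hasFDerivAt
  exact congrArg (· (Pi.single μ 1)) hUF.fderiv

theorem pd_coord (α μ : Fin D) (x : Fin D → ℝ) :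
    pd (fun y => y α) μ x = if α = μ then 1 else 0 := by
  rw [pd, (hasFDerivAt_apply α x).fderiv, ContinuousLinearMap.proj_apply, Pi.single_apply]

theorem differentiableAt_fderiv {E E' : Type*} [NormedAddCommGroup E] [NormedSpace ℝ E]
    [NormedAddCommGroup E'] [NormedSpace ℝ E'] {f : E → E'} {a : E} (hf : ContDiffAt ℝ 2 f a) :
    DifferentiableAt ℝ (fderiv ℝ f) a :=
  (hf.fderiv_right (m := 1) (by norm_num)).differentiableAt one_ne_zero

theorem differentiableAt_pd (hφ : ContDiffAt ℝ 2 φ x) (μ : Fin D) :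
    DifferentiableAt ℝ (pd φ μ) x :=
  (differentiableAt_fderiv hφ).clm_apply (differentiableAt_const _)

theorem pd_pd_eq_fderiv_fderiv (hφ : ContDiffAt ℝ 2 φ x) (μ ν : Fin D) :
    pd (pd φ ν) μ x = fderiv ℝ (fderiv ℝ φ) x (Pi.single μ 1) (Pi.single ν 1) := by
  change fderiv ℝ (fun y => fderiv ℝ φ y (Pi.single ν 1)) x (Pi.single μ 1) = _
  simp [fderiv_clm_apply (differentiableAt_fderiv hφ) (differentiableAt_const _)]

theorem pd_pd_comm (hφ : ContDiffAt ℝ 2 φ x) (μ ν : Fin D) :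
    pd (pd φ ν) μ x = pd (pd φ μ) ν x := by
  rw [pd_pd_eq_fderiv_fderiv hφ, pd_pd_eq_fderiv_fderiv hφ]
  exact hφ.isSymmSndFDerivAt (by simp) _ _

theorem sum_pd_coord_contraction {T : Fin D → Fin D → (Fin D → ℝ) → ℝ}
    (hT : ∀ μ α, DifferentiableAt ℝ (T μ α) x) :
    ∑ μ, pd (fun y => ∑ α, y α * T μ α y) μ x =
      ∑ μ, T μ μ x + ∑ α, x α * ∑ μ, pd (T μ α) μ x := by
  have pd_contraction (μ : Fin D) : pd (fun y => ∑ α, y α * T μ α y) μ x =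
      T μ μ x + ∑ α, x α * pd (T μ α) μ x := by
    rw [pd_sum fun α _ => (differentiableAt_apply α x).fun_mul (hT μ α)]
    simp only [pd_mul (differentiableAt_apply _ x) (hT μ _), pd_coord, Finset.sum_add_distrib,
      ite_mul, one_mul, zero_mul, Finset.sum_ite_eq', Finset.mem_univ, if_true]
  simp only [pd_contraction, Finset.sum_add_distrib, Finset.mul_sum]
  rw [Finset.sum_comm]

theorem pdu_eq_eta_mul_pd (F : (Fin D → ℝ) → ℝ) (μ : Fin D) (x : Fin D → ℝ) :
    pdu F μ x = eta D μ μ * pd F μ x :=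
  Finset.sum_eq_single μ (fun ν _ hν => by simp [eta, hν.symm]) (by simp)

theorem differentiableAt_pdu (hφ : ContDiffAt ℝ 2 φ x) (μ : Fin D) :
    DifferentiableAt ℝ (pdu φ μ) x :=
  DifferentiableAt.fun_sum fun ν _ => (differentiableAt_pd hφ ν).const_mul _

/-- The Lorentzian square `∂^μφ ∂_μφ` of the gradient, twice the kinetic term of `Lag`. -/
def gradSq (φ : (Fin D → ℝ) → ℝ) (x : Fin D → ℝ) : ℝ :=
  ∑ μ, pdu φ μ x * pd φ μ x

theorem differentiableAt_gradSq (hφ : ContDiffAt ℝ 2 φ x) : DifferentiableAt ℝ (gradSq φ) x :=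
  DifferentiableAt.fun_sum fun μ _ => (differentiableAt_pdu hφ μ).fun_mul (differentiableAt_pd hφ μ)

theorem pd_gradSq (hφ : ContDiffAt ℝ 2 φ x) (ν : Fin D) :
    pd (gradSq φ) ν x = 2 * ∑ μ, pdu φ μ x * pd (pd φ μ) ν x := by
  have hpd := differentiableAt_pd hφ
  have pd_pdu (μ : Fin D) : pd (pdu φ μ) ν x = eta D μ μ * pd (pd φ μ) ν x := by
    rw [← pd_const_mul (hpd μ)]
    exact congrArg (pd · ν x) (funext (pdu_eq_eta_mul_pd φ μ))
  calc pd (gradSq φ) ν x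
      = ∑ μ, (pd (pdu φ μ) ν x * pd φ μ x + pdu φ μ x * pd (pd φ μ) ν x) := by
        unfold gradSq
        rw [pd_sum fun μ _ => (differentiableAt_pdu hφ μ).fun_mul (hpd μ)]
        exact Finset.sum_congr rfl fun μ _ => pd_mul (differentiableAt_pdu hφ μ) (hpd μ) ν
    _ = 2 * ∑ μ, pdu φ μ x * pd (pd φ μ) ν x := by
        rw [Finset.mul_sum]
        refine Finset.sum_congr rfl fun μ _ => ?_
        rw [pd_pdu, pdu_eq_eta_mul_pd]
        ring

theorem sum_pd_mul_pdu (hφ : ContDiffAt ℝ 2 φ x) :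
    ∑ μ, pd (fun y => φ y * pdu φ μ y) μ x = gradSq φ x + φ x * box φ x := by
  have hφ1 := hφ.differentiableAt two_ne_zero
  simp only [pd_mul hφ1 (differentiableAt_pdu hφ _), Finset.sum_add_distrib, ← Finset.mul_sum,
    gradSq, box, mul_comm (pd φ _ x)]

theorem Lag_eq_gradSq (U : ℝ → ℝ) (φ : (Fin D → ℝ) → ℝ) (x : Fin D → ℝ) :
    Lag U φ x = 1 / 2 * gradSq φ x - U (φ x) := by
  simp only [Lag, gradSq, pdu, Finset.sum_mul, mul_right_comm _ (pd φ _ x) (pd φ _ x)]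

theorem differentiableAt_Lag (hU : DifferentiableAt ℝ U (φ x)) (hφ : ContDiffAt ℝ 2 φ x) :
    DifferentiableAt ℝ (Lag U φ) x := by
  rw [funext (Lag_eq_gradSq U φ)]
  exact ((differentiableAt_gradSq hφ).const_mul _).fun_sub
    (hU.fun_comp' x (hφ.differentiableAt two_ne_zero))

theorem pd_Lag (hU : DifferentiableAt ℝ U (φ x)) (hφ : ContDiffAt ℝ 2 φ x) (ν : Fin D) :
    pd (Lag U φ) ν x = ∑ μ, pdu φ μ x * pd (pd φ μ) ν x - deriv U (φ x) * pd φ ν x := by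
  have hφ1 := hφ.differentiableAt two_ne_zero
  have hS := differentiableAt_gradSq hφ
  rw [funext (Lag_eq_gradSq U φ), pd_sub (hS.const_mul _) (hU.fun_comp' x hφ1), pd_const_mul hS,
    pd_gradSq hφ, pd_comp hU hφ1]
  ring

theorem differentiableAt_EMTc (hU : DifferentiableAt ℝ U (φ x)) (hφ : ContDiffAt ℝ 2 φ x)
    (μ ν : Fin D) : DifferentiableAt ℝ (EMTc U φ μ ν) x := by
  refine ((differentiableAt_pdu hφ μ).fun_mul (differentiableAt_pd hφ ν)).sub ?_
  split_ifs
  · exact differentiableAt_Lag hU hφ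
  · exact differentiableAt_const 0

theorem pd_EMTc (hU : DifferentiableAt ℝ U (φ x)) (hφ : ContDiffAt ℝ 2 φ x) (μ ν : Fin D) :
    pd (EMTc U φ μ ν) μ x = pd (pdu φ μ) μ x * pd φ ν x + pdu φ μ x * pd (pd φ ν) μ x -
      if μ = ν then pd (Lag U φ) ν x else 0 := by
  have hpdu := differentiableAt_pdu hφ μ
  have hpd := differentiableAt_pd hφ ν
  unfold EMTc
  split_ifs with hμν
  · rw [pd_sub (hpdu.fun_mul hpd) (differentiableAt_Lag hU hφ), pd_mul hpdu hpd, hμν]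
  · simp only [sub_zero, pd_mul hpdu hpd]

theorem sum_pd_EMTc (hU : DifferentiableAt ℝ U (φ x)) (hφ : ContDiffAt ℝ 2 φ x) (ν : Fin D) :
    ∑ μ, pd (EMTc U φ μ ν) μ x = (box φ x + deriv U (φ x)) * pd φ ν x := by
  simp only [pd_EMTc hU hφ, Finset.sum_sub_distrib, Finset.sum_add_distrib, ← Finset.sum_mul,
    Finset.sum_ite_eq', Finset.mem_univ, if_true, pd_Lag hU hφ, pd_pd_comm hφ _ ν, box]
  ring

theorem sum_EMTc_self (U : ℝ → ℝ) (φ : (Fin D → ℝ) → ℝ) (x : Fin D → ℝ) :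
    ∑ μ, EMTc U φ μ μ x = (1 - (D : ℝ) / 2) * gradSq φ x + D * U (φ x) := by
  simp only [EMTc, if_true, Finset.sum_sub_distrib, Finset.sum_const, Finset.card_univ,
    Fintype.card_fin, nsmul_eq_mul, Lag_eq_gradSq]
  rw [← gradSq]
  ring

/-- The Noether current `J^μ = Δ φ ∂^μφ + x^α T^μ_α` of the dilations under which `φ` has scaling
dimension `Δ`, for an arbitrary real `Δ`. -/
def dilationCurrent (Δ : ℝ) (U : ℝ → ℝ) (φ : (Fin D → ℝ) → ℝ) (μ : Fin D) (x : Fin D → ℝ) : ℝ :=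
  Δ * φ x * pdu φ μ x + ∑ α, x α * EMTc U φ μ α x

theorem sum_pd_dilationCurrent (hU : DifferentiableAt ℝ U (φ x)) (hφ : ContDiffAt ℝ 2 φ x)
    (Δ : ℝ) :
    ∑ μ, pd (dilationCurrent Δ U φ μ) μ x =
      (Δ * φ x + ∑ α, x α * pd φ α x) * (box φ x + deriv U (φ x)) +
        (Δ - ((D : ℝ) - 2) / 2) * gradSq φ x + (D * U (φ x) - Δ * (φ x * deriv U (φ x))) := by
  have hφpdu (μ : Fin D) : DifferentiableAt ℝ (fun y => φ y * pdu φ μ y) x :=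
    (hφ.differentiableAt two_ne_zero).fun_mul (differentiableAt_pdu hφ μ)
  have hxT (μ : Fin D) : DifferentiableAt ℝ (fun y => ∑ α, y α * EMTc U φ μ α y) x :=
    DifferentiableAt.fun_sum fun α _ =>
      (differentiableAt_apply α x).fun_mul (differentiableAt_EMTc hU hφ μ α)
  calc ∑ μ, pd (dilationCurrent Δ U φ μ) μ x
      = Δ * ∑ μ, pd (fun y => φ y * pdu φ μ y) μ x +
          ∑ μ, pd (fun y => ∑ α, y α * EMTc U φ μ α y) μ x := by
        unfold dilationCurrent
        simp only [mul_assoc Δ, pd_add ((hφpdu _).const_mul Δ) (hxT _), pd_const_mul (hφpdu _),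
          Finset.sum_add_distrib, Finset.mul_sum]
    _ = Δ * (gradSq φ x + φ x * box φ x) + (∑ μ, EMTc U φ μ μ x +
          (∑ α, x α * pd φ α x) * (box φ x + deriv U (φ x))) := by
        rw [sum_pd_mul_pdu hφ, sum_pd_coord_contraction (differentiableAt_EMTc hU hφ)]
        simp only [sum_pd_EMTc hU hφ, Finset.sum_mul, mul_assoc, mul_comm (pd φ _ x)]
    _ = _ := by
        rw [sum_EMTc_self]
        ring

theorem homogeneous_potential_first_current_general
    (hU : DifferentiableAt ℝ U (φ x)) (hφ : ContDiffAt ℝ 2 φ x)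
    (hhom : ((D : ℝ) - 2) / 2 * (φ x * deriv U (φ x)) = D * U (φ x))
    (hEL : box φ x + deriv U (φ x) = 0) :
    ∑ μ, pd (dilationCurrent (((D : ℝ) - 2) / 2) U φ μ) μ x = 0 := by
  rw [sum_pd_dilationCurrent hU hφ, hEL, hhom]
  ring

end

/-- Theorem 3.7, first current: for a homogeneous potential of degree
`k = 2D/(D-2)`, the dilation current `J^μ` is conserved. -/
theorem homogeneous_potential_first_current {D : ℕ} (hD : 1 ≤ D) (hD2 : D ≠ 2)
    (U : ℝ → ℝ) (hU : ContDiff ℝ (⊤ : ℕ∞) U)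
    (hhom : ∀ u : ℝ, u * deriv U u = (2 * (D : ℝ) / ((D : ℝ) - 2)) * U u)
    (φ : (Fin D → ℝ) → ℝ) (hφ : ContDiff ℝ (⊤ : ℕ∞) φ)
    (hEL : ∀ x, box φ x + deriv U (φ x) = 0) :
    ∀ x, ∑ μ, pd (fun y =>
        ((D : ℝ) - 2) / 2 * φ y * pdu φ μ y +
          ∑ α, y α * EMTc U φ μ α y) μ x = 0 := by
  intro x
  have hD2' : (D : ℝ) - 2 ≠ 0 := sub_ne_zero.mpr (by exact_mod_cast hD2)
  refine homogeneous_potential_first_current_general (hU.differentiable (by simp) _)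
    (hφ.contDiffAt.of_le (WithTop.coe_le_coe.mpr le_top)) ?_ (hEL x)
  rw [hhom]
  field_simp

end
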